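/- Let r ≥ 3 be a real number, let n ≥ 4, let T be a triangulation of the n-gon, let e = {A,C} be a type-1 diagonal of T with Q_T(e) = ABCD, and let T' be the triangulation obtained from T by flipping e. If {B,C} is not a boundary edge then c(T') − c(T) ≡ 3σ_{BD} − 2σ_{AC} − σ_{BC} (mod 3⌈log_r n⌉), and if {B,C} is a boundary edge then c(T') − c(T) ≡ 3σ_{BD} − 2σ_{AC} (mod 3⌈log_r n⌉). -/

import Mathlib

/-!
Encode a family of chords `T` by the relation `Edge T p q` (`p < q` and `{p, q} ∈ T`). A diagonal
`pq` of a triangulation bounds one triangle with apex strictly between `p` and `q` (`HasInner`) and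
one with apex outside. It is type-1 when the outer apex lies above `q` (`HasUpper`) and type-2 when
it lies below `p` (`HasLower`).

Flipping `AC` to `BD` replaces the triangles `ABC`, `ACD` by `ABD`, `BCD`. The type-1 diagonal `AC`
disappears and the type-2 diagonal `BD` appears. Among the four sides, the outer apex of `AB` moves
from `C` to `D` (both above), that of `CD` from `A` to `B` (both below), that of `AD` is unchanged,
and only that of `BC` changes sides, from `A` to `D`; so `BC`, when it is a diagonal, turns from
type-2 into type-1. All other chords keep both of their triangles (`flip_type1_iff`,
`flip_type2_iff`). The only use of maximality is the existence of an inner triangle on a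
non-boundary `BC` (`exists_inner`).

The label is, modulo `3⌈log_r n⌉`, the sum over pairs `p < q` of `2σ` or `3σ` according to type
(`label_sum_eq`, `cLabel_modEq`), because every scale lies in the summation range. Comparing the two
sums pair by pair gives the claim.
-/


/-- `e` is a chord of the convex `n`-gon: a 2-element subset of `{0, …, n-1}`. -/
def IsChord (n : ℕ) (e : Finset ℕ) : Prop :=
  e.card = 2 ∧ ∀ x ∈ e, x < n

/-- `e` is a boundary edge of the `n`-gon, i.e. of the form `{i, (i+1) mod n}`. -/
def IsBoundaryEdge (n : ℕ) (e : Finset ℕ) : Prop :=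
  ∃ i < n, e = ({i, (i + 1) % n} : Finset ℕ)

/-- `e` is a diagonal of the `n`-gon: a chord that is not a boundary edge. -/
def IsDiagonal (n : ℕ) (e : Finset ℕ) : Prop :=
  IsChord n e ∧ ¬ IsBoundaryEdge n e

/-- Two chords `{a,b}` (`a<b`) and `{c,d}` (`c<d`) cross if `a<c<b<d` or `c<a<d<b`. -/
def Crosses (e f : Finset ℕ) : Prop :=
  ∃ a b c d : ℕ, a < b ∧ c < d ∧ e = ({a, b} : Finset ℕ) ∧ f = ({c, d} : Finset ℕ) ∧
    ((a < c ∧ c < b ∧ b < d) ∨ (c < a ∧ a < d ∧ d < b))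

/-- `T` is a triangulation of the `n`-gon: the set of all `n` boundary edges together
with a maximal set of pairwise non-crossing diagonals. -/
def IsTriangulation (n : ℕ) (T : Finset (Finset ℕ)) : Prop :=
  (∀ e ∈ T, IsChord n e) ∧
  (∀ i < n, ({i, (i + 1) % n} : Finset ℕ) ∈ T) ∧
  (∀ e ∈ T, ∀ f ∈ T, ¬ Crosses e f) ∧
  (∀ e, IsDiagonal n e → e ∉ T → ∃ f ∈ T, Crosses e f)

/-- The scale of the chord `{U, V}` with respect to the parameter `r`:
`σ_{UV} = ⌈log_r |U - V|⌉`. -/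
noncomputable def scale (r : ℝ) (U V : ℕ) : ℤ :=
  ⌈Real.log |(U : ℝ) - (V : ℝ)| / Real.log r⌉

/-- `a b c` (with `a < b < c`) is a triangle of `T`: all three sides are chords of `T`
(in a triangulation of a convex polygon they then bound a common face). -/
def IsTriangleOf (T : Finset (Finset ℕ)) (a b c : ℕ) : Prop :=
  a < b ∧ b < c ∧ ({a, b} : Finset ℕ) ∈ T ∧ ({b, c} : Finset ℕ) ∈ T ∧
    ({a, c} : Finset ℕ) ∈ T

/-- The diagonal `e` is type-1 in `T`: its quadrilateral `Q_T(e) = abcd` (with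
`a < b < c < d`) has `e = {a, c}`. -/
def IsType1 (T : Finset (Finset ℕ)) (e : Finset ℕ) : Prop :=
  ∃ a b c d : ℕ, a < b ∧ b < c ∧ c < d ∧ e = ({a, c} : Finset ℕ) ∧
    ({a, b} : Finset ℕ) ∈ T ∧ ({b, c} : Finset ℕ) ∈ T ∧ ({c, d} : Finset ℕ) ∈ T ∧
    ({a, d} : Finset ℕ) ∈ T ∧ ({a, c} : Finset ℕ) ∈ T

/-- The diagonal `e` is type-2 in `T`: its quadrilateral `Q_T(e) = abcd` (with
`a < b < c < d`) has `e = {b, d}`. -/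
def IsType2 (T : Finset (Finset ℕ)) (e : Finset ℕ) : Prop :=
  ∃ a b c d : ℕ, a < b ∧ b < c ∧ c < d ∧ e = ({b, d} : Finset ℕ) ∧
    ({a, b} : Finset ℕ) ∈ T ∧ ({b, c} : Finset ℕ) ∈ T ∧ ({c, d} : Finset ℕ) ∈ T ∧
    ({a, d} : Finset ℕ) ∈ T ∧ ({b, d} : Finset ℕ) ∈ T

open Classical in
/-- `s¹ᵢ(T)`: the number of type-1 diagonals of `T` of scale `i`. -/
noncomputable def sCount1 (r : ℝ) (n : ℕ) (T : Finset (Finset ℕ)) (i : ℕ) : ℕ :=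
  ((Finset.range n ×ˢ Finset.range n).filter
    (fun p => p.1 < p.2 ∧ IsType1 T ({p.1, p.2} : Finset ℕ) ∧
      scale r p.1 p.2 = (i : ℤ))).card

open Classical in
/-- `s²ᵢ(T)`: the number of type-2 diagonals of `T` of scale `i`. -/
noncomputable def sCount2 (r : ℝ) (n : ℕ) (T : Finset (Finset ℕ)) (i : ℕ) : ℕ :=
  ((Finset.range n ×ˢ Finset.range n).filter
    (fun p => p.1 < p.2 ∧ IsType2 T ({p.1, p.2} : Finset ℕ) ∧
      scale r p.1 p.2 = (i : ℤ))).card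

/-- The label `c(T) = (Σ_{i=0}^{⌈log_r(n-1)⌉} 2i·s¹ᵢ(T) + Σ_{i=0}^{⌈log_r(n-1)⌉} 3i·s²ᵢ(T))
mod (3⌈log_r n⌉)`. -/
noncomputable def cLabel (r : ℝ) (n : ℕ) (T : Finset (Finset ℕ)) : ℤ :=
  ((∑ i ∈ Finset.range (⌈Real.log ((n : ℝ) - 1) / Real.log r⌉₊ + 1),
      (2 * (i : ℤ) * (sCount1 r n T i : ℤ))) +
   (∑ i ∈ Finset.range (⌈Real.log ((n : ℝ) - 1) / Real.log r⌉₊ + 1),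
      (3 * (i : ℤ) * (sCount2 r n T i : ℤ)))) %
    (3 * (⌈Real.log (n : ℝ) / Real.log r⌉₊ : ℤ))

/-! ### Triangulations as relations -/

/-- The chord with endpoints `p < q` belongs to `T`. -/
def Edge (T : Finset (Finset ℕ)) (p q : ℕ) : Prop :=
  p < q ∧ ({p, q} : Finset ℕ) ∈ T

/-- The pair `pq` is completed to a triangle by a vertex strictly between `p` and `q`. The chord
`pq` itself is not required to belong to `T`. -/
def HasInner (T : Finset (Finset ℕ)) (p q : ℕ) : Prop :=
  ∃ b, Edge T p b ∧ Edge T b q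

/-- The pair `pq` is completed to a triangle by a vertex above `q`. -/
def HasUpper (T : Finset (Finset ℕ)) (p q : ℕ) : Prop :=
  ∃ d, Edge T q d ∧ Edge T p d

/-- The pair `pq` is completed to a triangle by a vertex below `p`. -/
def HasLower (T : Finset (Finset ℕ)) (p q : ℕ) : Prop :=
  ∃ a, Edge T a p ∧ Edge T a q

theorem pair_inj {a b c d : ℕ} (hab : a < b) (hcd : c < d)
    (h : ({a, b} : Finset ℕ) = {c, d}) : a = c ∧ b = d := by
  have h1 : a ∈ ({c, d} : Finset ℕ) := h ▸ by simp
  have h2 : b ∈ ({c, d} : Finset ℕ) := h ▸ by simp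
  have h3 : c ∈ ({a, b} : Finset ℕ) := h ▸ by simp
  simp only [Finset.mem_insert, Finset.mem_singleton] at h1 h2 h3
  omega

theorem isType1_iff {T : Finset (Finset ℕ)} {p q : ℕ} (hpq : p < q) :
    IsType1 T {p, q} ↔ Edge T p q ∧ HasInner T p q ∧ HasUpper T p q := by
  constructor
  · rintro ⟨a, b, c, d, hab, hbc, hcd, he, h1, h2, h3, h4, h5⟩
    obtain ⟨rfl, rfl⟩ := pair_inj hpq (hab.trans hbc) he
    exact ⟨⟨hpq, h5⟩, ⟨b, ⟨hab, h1⟩, hbc, h2⟩, d, ⟨hcd, h3⟩, hpq.trans hcd, h4⟩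
  · rintro ⟨⟨_, h5⟩, ⟨b, ⟨hab, h1⟩, hbc, h2⟩, d, ⟨hcd, h3⟩, _, h4⟩
    exact ⟨p, b, q, d, hab, hbc, hcd, rfl, h1, h2, h3, h4, h5⟩

theorem isType2_iff {T : Finset (Finset ℕ)} {p q : ℕ} (hpq : p < q) :
    IsType2 T {p, q} ↔ Edge T p q ∧ HasInner T p q ∧ HasLower T p q := by
  constructor
  · rintro ⟨a, b, c, d, hab, hbc, hcd, he, h1, h2, h3, h4, h5⟩
    obtain ⟨rfl, rfl⟩ := pair_inj hpq (hbc.trans hcd) he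
    exact ⟨⟨hpq, h5⟩, ⟨c, ⟨hbc, h2⟩, hcd, h3⟩, a, ⟨hab, h1⟩, hab.trans hpq, h4⟩
  · rintro ⟨⟨_, h5⟩, ⟨c, ⟨hbc, h2⟩, hcd, h3⟩, a, ⟨hab, h1⟩, _, h4⟩
    exact ⟨a, p, c, q, hab, hbc, hcd, rfl, h1, h2, h3, h4, h5⟩

theorem edge_flip {T : Finset (Finset ℕ)} {A B C D : ℕ} (hAC : A < C) (hBD : B < D) (p q : ℕ) :
    Edge (insert ({B, D} : Finset ℕ) (T.erase {A, C})) p q ↔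
      (p = B ∧ q = D) ∨ (Edge T p q ∧ ¬ (p = A ∧ q = C)) := by
  simp only [Edge, Finset.mem_insert, Finset.mem_erase]
  constructor
  · rintro ⟨hpq, h | ⟨h, h'⟩⟩
    · exact Or.inl (pair_inj hpq hBD h)
    · refine Or.inr ⟨⟨hpq, h'⟩, ?_⟩
      rintro ⟨rfl, rfl⟩
      exact h rfl
  · rintro (⟨rfl, rfl⟩ | ⟨⟨hpq, h⟩, h'⟩)
    · exact ⟨hBD, Or.inl rfl⟩
    · exact ⟨hpq, Or.inr ⟨fun he => h' (pair_inj hpq hAC he), h⟩⟩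

section Triangulation

variable {n : ℕ} {T : Finset (Finset ℕ)}

theorem IsTriangulation.not_cross (hT : IsTriangulation n T) {a b c d : ℕ}
    (hab : Edge T a b) (hcd : Edge T c d) (h1 : a < c) (h2 : c < b) (h3 : b < d) : False :=
  hT.2.2.1 _ hab.2 _ hcd.2 ⟨a, b, c, d, hab.1, hcd.1, rfl, rfl, Or.inl ⟨h1, h2, h3⟩⟩

theorem IsTriangulation.edge_succ (hT : IsTriangulation n T) {i : ℕ} (hi : i + 1 < n) :
    Edge T i (i + 1) := by
  have := hT.2.1 i (by omega)
  rw [Nat.mod_eq_of_lt hi] at this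
  exact ⟨Nat.lt_succ_self i, this⟩

/-- The hypothesis `0 < p` excludes the boundary edge `{0, n - 1}`. -/
theorem isBoundaryEdge_iff {p q : ℕ} (hp : 0 < p) (hpq : p < q) (hq : q < n) :
    IsBoundaryEdge n {p, q} ↔ q = p + 1 := by
  constructor
  · rintro ⟨i, hi, h⟩
    rcases Nat.lt_or_ge (i + 1) n with h' | h'
    · rw [Nat.mod_eq_of_lt h'] at h
      have := pair_inj hpq (Nat.lt_succ_self i) h
      omega
    · obtain rfl : n = i + 1 := by omega
      rw [Nat.mod_self] at h
      have : 0 ∈ ({p, q} : Finset ℕ) := h ▸ by simp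
      simp only [Finset.mem_insert, Finset.mem_singleton] at this
      omega
  · rintro rfl
    exact ⟨p, by omega, by rw [Nat.mod_eq_of_lt hq]⟩

/-- Every chord `pq` of a triangulation with `q ≠ p + 1` bounds a triangle with apex strictly
between its endpoints: the largest neighbour of `p` below `q` is such an apex. -/
theorem IsTriangulation.exists_inner (hT : IsTriangulation n T) {p q : ℕ} (hpq : Edge T p q)
    (hq : q < n) (h : q ≠ p + 1) : HasInner T p q := by
  classical
  have hlt := hpq.1
  let S := (Finset.range q).filter (Edge T p)
  have hne : S.Nonempty :=
    ⟨p + 1, Finset.mem_filter.2 ⟨Finset.mem_range.2 (by omega), hT.edge_succ (by omega)⟩⟩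
  obtain ⟨hbq, hpb⟩ := Finset.mem_filter.1 (S.max'_mem hne)
  have hmax : ∀ y, y < q → Edge T p y → y ≤ S.max' hne := fun y hy he =>
    S.le_max' y (Finset.mem_filter.2 ⟨Finset.mem_range.2 hy, he⟩)
  generalize S.max' hne = b at hbq hpb hmax
  rw [Finset.mem_range] at hbq
  have hb := hpb.1
  refine ⟨b, hpb, hbq, ?_⟩
  by_cases hs : q = b + 1
  · subst hs
    exact (hT.edge_succ hq).2
  by_contra hn
  have hdiag : IsDiagonal n {b, q} := by
    refine ⟨⟨Finset.card_pair hbq.ne, ?_⟩, ?_⟩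
    · intro x hx
      simp only [Finset.mem_insert, Finset.mem_singleton] at hx
      omega
    · rwa [isBoundaryEdge_iff (by omega) hbq hq]
  obtain ⟨f, hf, a, a', x, y, haa, hxy, he, rfl, hc⟩ := hT.2.2.2 _ hdiag hn
  obtain ⟨rfl, rfl⟩ := pair_inj hbq haa he
  have hfe : Edge T x y := ⟨hxy, hf⟩
  rcases hc with ⟨h1, h2, h3⟩ | ⟨h1, h2, h3⟩
  · exact hT.not_cross hpq hfe (by omega) h2 h3
  · rcases lt_trichotomy x p with hx | rfl | hx
    · exact hT.not_cross hfe hpq hx (by omega) h3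
    · exact absurd (hmax y h3 hfe) (by omega)
    · exact hT.not_cross hpb hfe hx h1 h2

end Triangulation

/-! ### The effect of a flip on types -/

section Flip

variable {n : ℕ} {T T' : Finset (Finset ℕ)} {A B C D : ℕ}

/-- A triangulation `T`, the quadrilateral `ABCD` of a type-1 diagonal `AC`, and the result `T'` of
the flip, given through its chords. -/
structure FlipData (n : ℕ) (T T' : Finset (Finset ℕ)) (A B C D : ℕ) : Prop where
  tri : IsTriangulation n T
  hAB : Edge T A B
  hBC : Edge T B C
  hCD : Edge T C D
  hAD : Edge T A D
  hAC : Edge T A C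
  hD : D < n
  edge : ∀ p q, Edge T' p q ↔ (p = B ∧ q = D) ∨ (Edge T p q ∧ ¬ (p = A ∧ q = C))

/-- Away from `AC`, the flip preserves the existence of inner triangles. Only `AD` has its inner
apex changed, from `C` to `B`. -/
theorem FlipData.hasInner_iff (F : FlipData n T T' A B C D) {p q : ℕ} (hpq : Edge T p q)
    (hne : ¬ (p = A ∧ q = C)) : HasInner T' p q ↔ HasInner T p q := by
  obtain ⟨tri, hAB, hBC, hCD, hAD, hAC, hD, edge⟩ := F
  have X := @IsTriangulation.not_cross n T tri
  have L : ∀ {p q}, Edge T p q → p < q := fun h => h.1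
  have l1 := L hAB
  have l2 := L hBC
  have l3 := L hCD
  constructor
  · rintro ⟨b, h1, h2⟩
    rw [edge] at h1 h2
    rcases h1 with ⟨rfl, rfl⟩ | ⟨h1, -⟩
    · rcases h2 with h2 | ⟨h2, -⟩
      · omega
      · exact (X hAD hpq l1 (by omega) (L h2)).elim
    rcases h2 with ⟨rfl, rfl⟩ | ⟨h2, -⟩
    · rcases lt_trichotomy p A with h | rfl | h
      · exact (X h1 hAC h (by omega) (by omega)).elim
      · exact ⟨C, hAC, hCD⟩
      · exact (X hAB hpq h (L h1) (by omega)).elim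
    · exact ⟨b, h1, h2⟩
  · rintro ⟨b, h1, h2⟩
    have m1 := L h1
    have m2 := L h2
    by_cases c1 : p = A ∧ b = C
    · obtain ⟨rfl, rfl⟩ := c1
      rcases lt_trichotomy q D with h | rfl | h
      · exact (X hpq hCD (by omega) m2 h).elim
      · exact ⟨B, (edge _ _).2 (Or.inr ⟨hAB, by omega⟩), (edge _ _).2 (Or.inl ⟨rfl, rfl⟩)⟩
      · exact (X hAD h2 (by omega) l3 h).elim
    by_cases c2 : b = A ∧ q = C
    · obtain ⟨rfl, rfl⟩ := c2
      exact (X hpq hAD m1 m2 l3).elim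
    exact ⟨b, (edge _ _).2 (Or.inr ⟨h1, c1⟩), (edge _ _).2 (Or.inr ⟨h2, c2⟩)⟩

/-- Among chords of `T` other than `AC` and `BC`, only `AB` has its upper apex changed, from `C`
to `D`. -/
theorem FlipData.hasUpper_iff (F : FlipData n T T' A B C D) {p q : ℕ} (hpq : Edge T p q)
    (hne : ¬ (p = A ∧ q = C)) (hne' : ¬ (p = B ∧ q = C)) : HasUpper T' p q ↔ HasUpper T p q := by
  obtain ⟨tri, hAB, hBC, hCD, hAD, hAC, hD, edge⟩ := F
  have X := @IsTriangulation.not_cross n T tri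
  have L : ∀ {p q}, Edge T p q → p < q := fun h => h.1
  have l0 := L hpq
  have l1 := L hAB
  have l2 := L hBC
  have l3 := L hCD
  constructor
  · rintro ⟨d, h1, h2⟩
    rw [edge] at h1 h2
    rcases h1 with ⟨rfl, rfl⟩ | ⟨h1, -⟩
    · rcases h2 with h2 | ⟨h2, -⟩
      · omega
      rcases lt_trichotomy p A with h | rfl | h
      · exact (X hpq hAC h l1 l2).elim
      · exact ⟨C, hBC, hAC⟩
      · exact (X hAB h2 h l0 (by omega)).elim
    rcases h2 with ⟨rfl, rfl⟩ | ⟨h2, -⟩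
    · have m1 := L h1
      rcases lt_trichotomy q C with h | rfl | h
      · exact (X hAC h1 (by omega) h l3).elim
      · exact absurd ⟨rfl, rfl⟩ hne'
      · exact (X hpq hCD l2 h m1).elim
    · exact ⟨d, h1, h2⟩
  · rintro ⟨d, h1, h2⟩
    have m1 := L h1
    by_cases c1 : q = A ∧ d = C
    · obtain ⟨rfl, rfl⟩ := c1
      exact (X h2 hAD l0 m1 l3).elim
    by_cases c2 : p = A ∧ d = C
    · obtain ⟨rfl, rfl⟩ := c2
      rcases lt_trichotomy q B with h | rfl | h
      · exact (X hAB h1 l0 h l2).elim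
      · exact ⟨D, (edge _ _).2 (Or.inl ⟨rfl, rfl⟩), (edge _ _).2 (Or.inr ⟨hAD, by omega⟩)⟩
      · exact (X hpq hBC l1 h m1).elim
    exact ⟨d, (edge _ _).2 (Or.inr ⟨h1, c1⟩), (edge _ _).2 (Or.inr ⟨h2, c2⟩)⟩

/-- Among chords of `T` other than `AC` and `BC`, only `CD` has its lower apex changed, from `A`
to `B`. -/
theorem FlipData.hasLower_iff (F : FlipData n T T' A B C D) {p q : ℕ} (hpq : Edge T p q)
    (hne : ¬ (p = A ∧ q = C)) (hne' : ¬ (p = B ∧ q = C)) : HasLower T' p q ↔ HasLower T p q := by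
  obtain ⟨tri, hAB, hBC, hCD, hAD, hAC, hD, edge⟩ := F
  have X := @IsTriangulation.not_cross n T tri
  have L : ∀ {p q}, Edge T p q → p < q := fun h => h.1
  have l0 := L hpq
  have l1 := L hAB
  have l2 := L hBC
  have l3 := L hCD
  constructor
  · rintro ⟨a, h1, h2⟩
    rw [edge] at h1 h2
    rcases h1 with ⟨rfl, rfl⟩ | ⟨h1, -⟩
    · rcases h2 with h2 | ⟨h2, -⟩
      · omega
      · exact (X hAD h2 l1 (by omega) l0).elim
    rcases h2 with ⟨rfl, rfl⟩ | ⟨h2, -⟩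
    · have m1 := L h1
      rcases lt_trichotomy p C with h | rfl | h
      · exact (X hAC hpq (by omega) h l3).elim
      · exact ⟨A, hAC, hAD⟩
      · exact (X h1 hCD l2 h l0).elim
    · exact ⟨a, h1, h2⟩
  · rintro ⟨a, h1, h2⟩
    have m1 := L h1
    by_cases c1 : a = A ∧ p = C
    · obtain ⟨rfl, rfl⟩ := c1
      rcases lt_trichotomy q D with h | rfl | h
      · exact (X h2 hCD m1 l0 h).elim
      · exact ⟨B, (edge _ _).2 (Or.inr ⟨hBC, by omega⟩), (edge _ _).2 (Or.inl ⟨rfl, rfl⟩)⟩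
      · exact (X hAD hpq m1 l3 h).elim
    by_cases c2 : a = A ∧ q = C
    · obtain ⟨rfl, rfl⟩ := c2
      rcases lt_trichotomy p B with h | rfl | h
      · exact (X hAB hpq m1 h l2).elim
      · exact absurd ⟨rfl, rfl⟩ hne'
      · exact (X h1 hBC l1 h l0).elim
    exact ⟨a, (edge _ _).2 (Or.inr ⟨h1, c1⟩), (edge _ _).2 (Or.inr ⟨h2, c2⟩)⟩

theorem FlipData.not_edge_BD (F : FlipData n T T' A B C D) : ¬ Edge T B D := fun h =>
  F.tri.not_cross F.hAC h F.hAB.1 F.hBC.1 F.hCD.1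

theorem FlipData.not_hasUpper_BC (F : FlipData n T T' A B C D) : ¬ HasUpper T B C :=
  fun ⟨_, h1, h2⟩ => F.tri.not_cross F.hAC h2 F.hAB.1 F.hBC.1 h1.1

theorem FlipData.not_hasLower_BC (F : FlipData n T T' A B C D) : ¬ HasLower T' B C := by
  rintro ⟨a, h1, h2⟩
  rw [F.edge] at h1 h2
  have l1 := F.hAB.1
  have l2 := F.hBC.1
  have l3 := F.hCD.1
  rcases h1 with h1 | ⟨h1, -⟩
  · omega
  rcases h2 with h2 | ⟨h2, h3⟩
  · omega
  have m1 := h1.1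
  rcases lt_trichotomy a A with h | rfl | h
  · exact F.tri.not_cross h2 F.hAD h (by omega) l3
  · exact h3 ⟨rfl, rfl⟩
  · exact F.tri.not_cross F.hAB h2 h m1 l2

theorem FlipData.not_hasUpper_BD (F : FlipData n T T' A B C D) : ¬ HasUpper T' B D := by
  rintro ⟨d, h1, h2⟩
  rw [F.edge] at h1 h2
  have l1 := F.hAB.1
  have l2 := F.hBC.1
  have l3 := F.hCD.1
  rcases h1 with h1 | ⟨h1, -⟩
  · omega
  have m1 := h1.1
  rcases h2 with h2 | ⟨h2, -⟩
  · omega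
  exact F.tri.not_cross F.hAD h2 l1 (by omega) m1

theorem FlipData.not_hasLower_AC (F : FlipData n T T' A B C D) : ¬ HasLower T A C :=
  fun ⟨_, h1, h2⟩ => F.tri.not_cross h2 F.hAD h1.1 F.hAC.1 F.hCD.1

/-- The flip deletes `AC` from the type-1 diagonals and adds `BC` if it is a diagonal, that is, if
it has an inner triangle. -/
theorem FlipData.flip_type1_iff (F : FlipData n T T' A B C D) {p q : ℕ} (hpq : p < q) :
    IsType1 T' {p, q} ↔ (IsType1 T {p, q} ∧ ¬ (p = A ∧ q = C)) ∨
      (HasInner T B C ∧ p = B ∧ q = C) := by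
  rw [isType1_iff hpq, isType1_iff hpq]
  have l1 := F.hAB.1
  have l2 := F.hBC.1
  have l3 := F.hCD.1
  by_cases c1 : p = A ∧ q = C
  · have h : ¬ Edge T' p q := by rw [F.edge]; omega
    have h' : p ≠ B := by omega
    obtain ⟨rfl, rfl⟩ := c1
    simp [h, h']
  by_cases c2 : p = B ∧ q = C
  · obtain ⟨rfl, rfl⟩ := c2
    have h1 : Edge T' p q := (F.edge _ _).2 (Or.inr ⟨F.hBC, c1⟩)
    have h2 : HasUpper T' p q :=
      ⟨D, (F.edge _ _).2 (Or.inr ⟨F.hCD, by omega⟩), (F.edge _ _).2 (Or.inl ⟨rfl, rfl⟩)⟩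
    have h3 := F.hasInner_iff F.hBC c1
    have h4 := F.not_hasUpper_BC
    simp [h1, h2, h3, h4]
  by_cases c3 : p = B ∧ q = D
  · obtain ⟨rfl, rfl⟩ := c3
    have h1 := F.not_edge_BD
    have h2 := F.not_hasUpper_BD
    simp [h1, h2, l3.ne']
  have h1 : Edge T' p q ↔ Edge T p q := by simp [F.edge, c1, c3]
  rw [h1]
  simp only [c1, c2, not_false_eq_true, and_true, and_false, or_false]
  exact and_congr_right fun h =>
    and_congr (F.hasInner_iff h c1) (F.hasUpper_iff h c1 c2)

/-- The flip deletes `BC` (if present) from the type-2 diagonals and adds `BD`. -/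
theorem FlipData.flip_type2_iff (F : FlipData n T T' A B C D) {p q : ℕ} (hpq : p < q) :
    IsType2 T' {p, q} ↔ (IsType2 T {p, q} ∧ ¬ (p = B ∧ q = C)) ∨ (p = B ∧ q = D) := by
  rw [isType2_iff hpq, isType2_iff hpq]
  have l1 := F.hAB.1
  have l2 := F.hBC.1
  have l3 := F.hCD.1
  by_cases c1 : p = A ∧ q = C
  · have h : ¬ Edge T' p q := by rw [F.edge]; omega
    have h' : p ≠ B := by omega
    obtain ⟨rfl, rfl⟩ := c1
    have := F.not_hasLower_AC
    simp [h, h', this]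
  by_cases c2 : p = B ∧ q = C
  · have h' : q ≠ D := by omega
    obtain ⟨rfl, rfl⟩ := c2
    have h4 := F.not_hasLower_BC
    simp [h', h4]
  by_cases c3 : p = B ∧ q = D
  · have h0 : Edge T' p q := (F.edge _ _).2 (Or.inl c3)
    obtain ⟨rfl, rfl⟩ := c3
    have h1 : HasInner T' p q :=
      ⟨C, (F.edge _ _).2 (Or.inr ⟨F.hBC, by omega⟩), (F.edge _ _).2 (Or.inr ⟨F.hCD, by omega⟩)⟩
    have h2 : HasLower T' p q :=
      ⟨A, (F.edge _ _).2 (Or.inr ⟨F.hAB, by omega⟩), (F.edge _ _).2 (Or.inr ⟨F.hAD, by omega⟩)⟩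
    simp [h0, h1, h2]
  have h1 : Edge T' p q ↔ Edge T p q := by simp [F.edge, c1, c3]
  rw [h1]
  simp only [c2, c3, not_false_eq_true, and_true, or_false]
  exact and_congr_right fun h =>
    and_congr (F.hasInner_iff h c1) (F.hasLower_iff h c1 c2)

theorem FlipData.type1_AC (F : FlipData n T T' A B C D) : IsType1 T {A, C} :=
  (isType1_iff F.hAC.1).2 ⟨F.hAC, ⟨B, F.hAB, F.hBC⟩, D, F.hCD, F.hAD⟩

theorem FlipData.not_type1_BC (F : FlipData n T T' A B C D) : ¬ IsType1 T {B, C} := fun h =>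
  F.not_hasUpper_BC ((isType1_iff F.hBC.1).1 h).2.2

theorem FlipData.type2_BC_iff (F : FlipData n T T' A B C D) :
    IsType2 T {B, C} ↔ HasInner T B C := by
  rw [isType2_iff F.hBC.1]
  exact ⟨fun h => h.2.1, fun h => ⟨F.hBC, h, A, F.hAB, F.hAC⟩⟩

theorem FlipData.not_type2_BD (F : FlipData n T T' A B C D) : ¬ IsType2 T {B, D} := fun h =>
  F.not_edge_BD ((isType2_iff (F.hBC.1.trans F.hCD.1)).1 h).1

end Flip

/-! ### The label as a sum over pairs -/

/-- For `0 ≤ p < q < n`, the scale of `pq` is one of `0, …, ⌈log_r (n - 1)⌉`. -/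
theorem scale_mem {r : ℝ} (hr : 3 ≤ r) {n p q : ℕ} (hpq : p < q) (hq : q < n) :
    0 ≤ scale r p q ∧
      (scale r p q).toNat ∈ Finset.range (⌈Real.log ((n : ℝ) - 1) / Real.log r⌉₊ + 1) := by
  have hlog : 0 < Real.log r := Real.log_pos (by linarith)
  have h1 : (p : ℝ) + 1 ≤ q := by exact_mod_cast hpq
  have h2 : (q : ℝ) + 1 ≤ n := by exact_mod_cast hq
  have h3 : (0 : ℝ) ≤ p := Nat.cast_nonneg p
  have habs : |(p : ℝ) - q| = q - p := by rw [abs_sub_comm, abs_of_pos (by linarith)]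
  have h0 : 0 ≤ scale r p q := by
    unfold scale
    rw [habs]
    exact Int.ceil_nonneg (div_nonneg (Real.log_nonneg (by linarith)) hlog.le)
  refine ⟨h0, ?_⟩
  rw [Finset.mem_range, Nat.lt_succ_iff, Int.toNat_le]
  unfold scale
  rw [habs, Int.ceil_le]
  refine le_trans ?_ (Nat.le_ceil _)
  exact div_le_div_of_nonneg_right (Real.log_le_log (by linarith) (by linarith)) hlog.le

open Classical in
/-- Grouping the pairs by scale: the sum over `i` of `k * i` times the number of pairs of scale `i`
satisfying `P` is the sum of `k * σ` over all pairs satisfying `P`. -/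
theorem label_sum_eq {r : ℝ} (hr : 3 ≤ r) (n : ℕ) (k : ℤ) (P : ℕ × ℕ → Prop) :
    ∑ i ∈ Finset.range (⌈Real.log ((n : ℝ) - 1) / Real.log r⌉₊ + 1),
      (k * (i : ℤ) * ((((Finset.range n ×ˢ Finset.range n).filter
        (fun p => p.1 < p.2 ∧ P p ∧ scale r p.1 p.2 = (i : ℤ))).card : ℕ) : ℤ)) =
    ∑ p ∈ (Finset.range n ×ˢ Finset.range n).filter (fun p => p.1 < p.2),
      if P p then k * scale r p.1 p.2 else 0 := by
  rw [← Finset.sum_filter, Finset.filter_filter]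
  have hmem : ∀ p ∈ (Finset.range n ×ˢ Finset.range n).filter (fun p => p.1 < p.2 ∧ P p),
      0 ≤ scale r p.1 p.2 ∧ (scale r p.1 p.2).toNat ∈
        Finset.range (⌈Real.log ((n : ℝ) - 1) / Real.log r⌉₊ + 1) := by
    intro p hp
    simp only [Finset.mem_filter, Finset.mem_product, Finset.mem_range] at hp
    exact scale_mem hr hp.2.1 hp.1.2
  rw [← Finset.sum_fiberwise_of_maps_to (fun p hp => (hmem p hp).2)]
  refine Finset.sum_congr rfl fun i _ => ?_
  have hset : (Finset.range n ×ˢ Finset.range n).filter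
        (fun p => p.1 < p.2 ∧ P p ∧ scale r p.1 p.2 = (i : ℤ)) =
      ((Finset.range n ×ˢ Finset.range n).filter (fun p => p.1 < p.2 ∧ P p)).filter
        (fun p => (scale r p.1 p.2).toNat = i) := by
    ext p
    constructor
    · intro hp
      obtain ⟨h1, h2, h3, h4⟩ := Finset.mem_filter.1 hp
      exact Finset.mem_filter.2 ⟨Finset.mem_filter.2 ⟨h1, h2, h3⟩, by omega⟩
    · intro hp
      obtain ⟨h1, h2⟩ := Finset.mem_filter.1 hp
      have h3 := (hmem p h1).1
      obtain ⟨h4, h5, h6⟩ := Finset.mem_filter.1 h1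
      exact Finset.mem_filter.2 ⟨h4, h5, h6, by omega⟩
  rw [hset, Finset.sum_congr rfl (g := fun _ => k * (i : ℤ)), Finset.sum_const, nsmul_eq_mul,
    mul_comm]
  intro p hp
  obtain ⟨h1, h2⟩ := Finset.mem_filter.1 hp
  have h3 := (hmem p h1).1
  rw [show scale r p.1 p.2 = (i : ℤ) by omega]

open Classical in
/-- The contribution of the pair `p` to the label: `2σ` for type 1 and `3σ` for type 2. -/
noncomputable def weight (r : ℝ) (T : Finset (Finset ℕ)) (p : ℕ × ℕ) : ℤ :=
  (if IsType1 T {p.1, p.2} then 2 * scale r p.1 p.2 else 0) +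
    (if IsType2 T {p.1, p.2} then 3 * scale r p.1 p.2 else 0)

open Classical in
theorem cLabel_modEq {r : ℝ} (hr : 3 ≤ r) (n : ℕ) (T : Finset (Finset ℕ)) :
    cLabel r n T ≡
      ∑ p ∈ (Finset.range n ×ˢ Finset.range n).filter (fun p => p.1 < p.2), weight r T p
      [ZMOD (3 * (⌈Real.log (n : ℝ) / Real.log r⌉₊ : ℤ))] := by
  unfold cLabel sCount1 sCount2
  rw [label_sum_eq hr n 2 (fun p => IsType1 T {p.1, p.2}),
    label_sum_eq hr n 3 (fun p => IsType2 T {p.1, p.2}), ← Finset.sum_add_distrib]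
  exact Int.mod_modEq _ _

open Classical in
theorem FlipData.weight_sub {n : ℕ} {T T' : Finset (Finset ℕ)} {A B C D : ℕ}
    (F : FlipData n T T' A B C D) (r : ℝ) {p : ℕ × ℕ} (hp : p.1 < p.2) :
    weight r T' p - weight r T p =
      (if p = (B, D) then 3 * scale r B D else 0) - (if p = (A, C) then 2 * scale r A C else 0) -
        (if p = (B, C) then (if HasInner T B C then scale r B C else 0) else 0) := by
  obtain ⟨p, q⟩ := p
  have l1 := F.hAB.1
  have l2 := F.hBC.1
  have l3 := F.hCD.1
  simp only [weight, F.flip_type1_iff hp, F.flip_type2_iff hp, Prod.mk.injEq]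
  by_cases c1 : p = A ∧ q = C
  · have h1 : p ≠ B := by omega
    obtain ⟨rfl, rfl⟩ := c1
    simp [h1, F.type1_AC]
  by_cases c2 : p = B ∧ q = C
  · have h1 : p ≠ A := by omega
    have h2 : q ≠ D := by omega
    obtain ⟨rfl, rfl⟩ := c2
    simp only [F.not_type1_BC, F.type2_BC_iff, h1, h2]
    by_cases h : HasInner T p q <;> simp [h]
    ring
  by_cases c3 : p = B ∧ q = D
  · have h1 : p ≠ A := by omega
    have h2 : q ≠ C := by omega
    obtain ⟨rfl, rfl⟩ := c3
    simp [h1, h2, F.not_type2_BD]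
  simp [c1, c2, c3]

open Classical in
theorem FlipData.cLabel_sub {n : ℕ} {T T' : Finset (Finset ℕ)} {A B C D : ℕ}
    (F : FlipData n T T' A B C D) {r : ℝ} (hr : 3 ≤ r) :
    cLabel r n T' - cLabel r n T ≡
      3 * scale r B D - 2 * scale r A C - (if HasInner T B C then scale r B C else 0)
      [ZMOD (3 * (⌈Real.log (n : ℝ) / Real.log r⌉₊ : ℤ))] := by
  refine ((cLabel_modEq hr n T').sub (cLabel_modEq hr n T)).trans ?_
  have hm : ∀ x y : ℕ, x < y → y < n →
      (x, y) ∈ (Finset.range n ×ˢ Finset.range n).filter (fun p => p.1 < p.2) := by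
    intro x y h1 h2
    simp only [Finset.mem_filter, Finset.mem_product, Finset.mem_range]
    omega
  have l1 := F.hAB.1
  have l2 := F.hBC.1
  have l3 := F.hCD.1
  have l4 := F.hD
  rw [← Finset.sum_sub_distrib,
    Finset.sum_congr rfl fun p hp => F.weight_sub r (Finset.mem_filter.1 hp).2,
    Finset.sum_sub_distrib, Finset.sum_sub_distrib, Finset.sum_ite_eq', Finset.sum_ite_eq',
    Finset.sum_ite_eq', if_pos (hm B D (by omega) l4), if_pos (hm A C (by omega) (by omega)),
    if_pos (hm B C l2 (by omega))]

/-- When flipping the type-1 diagonal `{A, C}` with quadrilateral `ABCD`: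
if `{B, C}` is not a boundary edge then
`c(T') - c(T) ≡ 3σ_{BD} - 2σ_{AC} - σ_{BC} (mod 3⌈log_r n⌉)`, and if `{B, C}` is a
boundary edge then `c(T') - c(T) ≡ 3σ_{BD} - 2σ_{AC} (mod 3⌈log_r n⌉)`. -/
theorem cLabel_flip_difference
    (r : ℝ) (hr : 3 ≤ r) (n : ℕ) (hn : 4 ≤ n)
    (T : Finset (Finset ℕ)) (hT : IsTriangulation n T)
    (A B C D : ℕ) (hAB : A < B) (hBC : B < C) (hCD : C < D) (hD : D < n)
    (hABm : ({A, B} : Finset ℕ) ∈ T) (hBCm : ({B, C} : Finset ℕ) ∈ T)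
    (hCDm : ({C, D} : Finset ℕ) ∈ T) (hADm : ({A, D} : Finset ℕ) ∈ T)
    (hACm : ({A, C} : Finset ℕ) ∈ T) :
    (¬ IsBoundaryEdge n ({B, C} : Finset ℕ) →
      cLabel r n (insert ({B, D} : Finset ℕ) (T.erase ({A, C} : Finset ℕ))) - cLabel r n T ≡
        3 * scale r B D - 2 * scale r A C - scale r B C
          [ZMOD (3 * (⌈Real.log (n : ℝ) / Real.log r⌉₊ : ℤ))]) ∧
    (IsBoundaryEdge n ({B, C} : Finset ℕ) →
      cLabel r n (insert ({B, D} : Finset ℕ) (T.erase ({A, C} : Finset ℕ))) - cLabel r n T ≡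
        3 * scale r B D - 2 * scale r A C
          [ZMOD (3 * (⌈Real.log (n : ℝ) / Real.log r⌉₊ : ℤ))]) := by
  have F : FlipData n T (insert ({B, D} : Finset ℕ) (T.erase ({A, C} : Finset ℕ))) A B C D :=
    ⟨hT, ⟨hAB, hABm⟩, ⟨hBC, hBCm⟩, ⟨hCD, hCDm⟩, ⟨by omega, hADm⟩, ⟨by omega, hACm⟩, hD,
      edge_flip (by omega) (by omega)⟩
  have key := F.cLabel_sub hr
  have hb := isBoundaryEdge_iff (n := n) (p := B) (q := C) (by omega) hBC (by omega)
  constructor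
  · intro h
    rw [hb] at h
    rwa [if_pos (hT.exists_inner F.hBC (by omega) h)] at key
  · intro h
    rw [hb] at h
    have hBC_empty : ¬ HasInner T B C := by
      rintro ⟨b, h1, h2⟩
      have := h1.1
      have := h2.1
      omega
    rwa [if_neg hBC_empty, sub_zero] at key
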